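/- Let A be a uniform algebra on a compact Hausdorff space K and let Γ ⊆ K be a closed boundary for A in which the set of strong boundary points of A is dense (these properties hold for the Shilov boundary of A). For f ∈ A with ‖f‖_∞ = 1, the following are equivalent: (i) f is a Daugavet point of A (for every ε > 0 the closed unit ball B_A equals the closed convex hull of Δ_ε(f) = {g ∈ B_A : ‖f − g‖_∞ ≥ 2 − ε}); (ii) f is a Δ-point of A (f belongs to the closed convex hull of Δ_ε(f) for every ε > 0); (iii) there exists a limit point t₀ of Γ (t₀ ∈ Γ such that every neighborhood of t₀ meets Γ∖{t₀}) with |f(t₀)| = 1. -/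

import Mathlib

set_option maxHeartbeats 1000000
set_option synthInstance.maxHeartbeats 1000000

/-- `t₀` is a strong boundary point for the algebra `A ⊆ C(K,ℂ)`. -/
def IsStrongBoundaryPoint {K : Type*} [TopologicalSpace K] [CompactSpace K]
    (A : Subalgebra ℂ C(K, ℂ)) (t₀ : K) : Prop :=
  ∀ U : Set K, IsOpen U → t₀ ∈ U →
    ∃ h ∈ A, h t₀ = 1 ∧ ‖h‖ = 1 ∧ ∃ c : ℝ, c < 1 ∧ ∀ t ∉ U, ‖h t‖ ≤ c

/-!
Suppose `|f t₀| = 1` at a limit point `t₀` of `Γ`. Near `t₀` there are infinitely many strong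
boundary points `t` with `|f t|` almost `1`. Any `g` in the unit ball can be changed near one of
them, inside `A` and inside the unit ball, so that its value at `t` becomes almost `-f t`; the
result is almost at distance `2` from `f`. Doing this at `n` points with disjoint neighbourhoods
and averaging moves `g` by little more than `2 / n`. The change is `g (1 - u) + c u`, where `u` is
almost `1` at `t`, small away from `t`, and `|u| + |1 - u| ≤ 1 + η`; such a `u` is a polynomial in
a peaking function, the polynomial approximating a map of the disc into a thin neighbourhood of
`[0, 1]`.

Conversely, if `|f| < 1` at all limit points of `Γ`, then `|f| = 1` on `Γ` only on a finite set
`H`, and `|f|` is bounded away from `1` on the rest of `Γ`. If `g` in the unit ball is almost at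
distance `2` from `f`, this distance is attained at a point of `H`, where `Re (conj f * g) ≤ 0`.
Hence the functional `g ↦ ∑ t ∈ H, Re (conj (f t) * g t)` is at most `|H| - 1` at such `g`, while
it is `|H|` at `f`.
-/

open Filter Topology Metric

theorem exists_polynomial_forall_norm_eval_sub_le {f : ℂ → ℂ} {r R : ℝ}
    (hf : DifferentiableOn ℂ f (ball 0 R)) (hr : 0 ≤ r) (hrR : r < R) {ε : ℝ} (hε : 0 < ε) :
    ∃ p : Polynomial ℂ, p.eval 0 = f 0 ∧ ∀ z, ‖z‖ ≤ r → ‖p.eval z - f z‖ ≤ ε := by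
  obtain ⟨a, hra, haR⟩ := exists_between hrR
  obtain ⟨b, hab, hbR⟩ := exists_between haR
  lift a to NNReal using hr.trans hra.le
  lift b to NNReal using a.2.trans hab.le
  have hseries := (hf.mono (closedBall_subset_ball hbR)).hasFPowerSeriesOnBall
    (NNReal.coe_pos.1 (a.2.trans_lt hab))
  have happrox := tendstoUniformlyOn_iff.1
    (hseries.tendstoUniformlyOn (ENNReal.coe_lt_coe.2 (NNReal.coe_lt_coe.1 hab))) ε hε
  obtain ⟨n, hn, hn₀⟩ := (happrox.and (eventually_gt_atTop 0)).exists
  refine ⟨∑ k ∈ Finset.range n, Polynomial.monomial k ((cauchyPowerSeries f 0 b).coeff k), ?_,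
    fun z hz => ?_⟩
  · rw [Polynomial.eval_finsetSum, Finset.sum_eq_single_of_mem 0 (Finset.mem_range.2 hn₀)
      fun k _ hk => by rw [Polynomial.eval_monomial, zero_pow hk, mul_zero],
      Polynomial.eval_monomial, pow_zero, mul_one]
    exact hseries.coeff_zero _
  · have hdist := hn z (mem_ball_zero_iff.2 (hz.trans_lt hra))
    rw [zero_add, dist_eq_norm, norm_sub_rev] at hdist
    refine le_of_eq_of_le ?_ hdist.le
    simp only [FormalMultilinearSeries.partialSum, FormalMultilinearSeries.apply_eq_pow_smul_coeff,
      Polynomial.eval_finsetSum, Polynomial.eval_monomial, smul_eq_mul, mul_comm]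

theorem norm_add_norm_one_sub_le {w : ℂ} {δ : ℝ} (hre : -δ ≤ w.re) (hre' : w.re ≤ 1)
    (him : |w.im| ≤ δ) : ‖w‖ + ‖1 - w‖ ≤ 1 + 4 * δ := by
  have hw : ‖w‖ ≤ |w.re| + |w.im| := w.norm_le_abs_re_add_abs_im
  have hw' : ‖1 - w‖ ≤ |1 - w.re| + |w.im| := by
    simpa using (1 - w).norm_le_abs_re_add_abs_im
  have habs : |w.re| ≤ w.re + 2 * δ :=
    abs_le.2 ⟨by linarith, by linarith [(abs_nonneg _).trans him]⟩
  have habs' : |1 - w.re| = 1 - w.re := abs_of_nonneg (sub_nonneg.2 hre')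
  linarith

/-- The function `z ↦ -log (1 - (1 - e⁻ᴸ) z) / L`. It fixes `0` and `1`, and for large `L` it maps
the closed unit disc into a thin neighbourhood of the segment `[0, 1]`. -/
noncomputable def logPeak (L : ℝ) (z : ℂ) : ℂ :=
  -Complex.log (1 - (1 - Real.exp (-L) : ℝ) * z) / L

theorem logPeak_zero (L : ℝ) : logPeak L 0 = 0 := by simp [logPeak]

theorem logPeak_one {L : ℝ} (hL : L ≠ 0) : logPeak L 1 = 1 := by
  have harg : (1 - (1 - Real.exp (-L) : ℝ) * 1 : ℂ) = (Real.exp (-L) : ℝ) := by push_cast; ring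
  rw [logPeak, harg, ← Complex.ofReal_log (Real.exp_pos _).le, Real.log_exp, Complex.ofReal_neg,
    neg_neg, div_self (Complex.ofReal_ne_zero.2 hL)]

theorem differentiableOn_logPeak {L : ℝ} (hL : 0 < L) :
    DifferentiableOn ℂ (logPeak L) (ball 0 (1 - Real.exp (-L))⁻¹) := by
  have hr : 0 < 1 - Real.exp (-L) := by simpa using hL
  intro z hz
  have hz' : ‖((1 - Real.exp (-L) : ℝ) * z : ℂ)‖ < 1 := by
    rw [norm_mul, Complex.norm_real, Real.norm_of_nonneg hr.le, ← lt_inv_mul_iff₀ hr, mul_one]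
    exact mem_ball_zero_iff.1 hz
  have hslit : (1 - (1 - Real.exp (-L) : ℝ) * z : ℂ) ∈ Complex.slitPlane := by
    simpa only [sub_eq_add_neg] using Complex.mem_slitPlane_of_norm_lt_one (by rwa [norm_neg])
  have hdiff : DifferentiableAt ℂ (fun z => 1 - ((1 - Real.exp (-L) : ℝ) * z : ℂ)) z := by fun_prop
  exact ((hdiff.clog hslit).neg.div_const _).differentiableWithinAt

theorem re_log_one_sub_mem_Icc {L : ℝ} {v : ℂ} (hv : ‖v‖ ≤ 1 - Real.exp (-L)) :
    (Complex.log (1 - v)).re ∈ Set.Icc (-L) 1 := by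
  have hexp := Real.exp_pos (-L)
  have hlower : Real.exp (-L) ≤ ‖1 - v‖ := by
    have := norm_sub_norm_le 1 v
    rw [norm_one] at this
    linarith
  have hupper : ‖1 - v‖ ≤ 2 := by
    have := norm_sub_le 1 v
    rw [norm_one] at this
    linarith
  rw [Complex.log_re]
  exact ⟨(Real.le_log_iff_exp_le (hexp.trans_le hlower)).2 hlower,
    by linarith [Real.log_le_sub_one_of_pos (hexp.trans_le hlower)]⟩

theorem abs_im_log_one_sub_le {v : ℂ} (hv : ‖v‖ ≤ 1) :
    |(Complex.log (1 - v)).im| ≤ Real.pi / 2 := by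
  rw [Complex.log_im, Complex.abs_arg_le_pi_div_two_iff, Complex.sub_re, Complex.one_re, sub_nonneg]
  exact v.re_le_norm.trans hv

theorem norm_logPeak_add_norm_one_sub_logPeak_le {L : ℝ} (hL : 0 < L) {z : ℂ} (hz : ‖z‖ ≤ 1) :
    ‖logPeak L z‖ + ‖1 - logPeak L z‖ ≤ 1 + 8 / L := by
  set v : ℂ := (1 - Real.exp (-L) : ℝ) * z
  have hv : ‖v‖ ≤ 1 - Real.exp (-L) := by
    have hr : 0 ≤ 1 - Real.exp (-L) := by simpa using hL.le
    rw [norm_mul, Complex.norm_real, Real.norm_of_nonneg hr]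
    exact mul_le_of_le_one_right hr hz
  obtain ⟨hre_lower, hre_upper⟩ := re_log_one_sub_mem_Icc hv
  have him := abs_im_log_one_sub_le (hv.trans (sub_le_self 1 (Real.exp_pos (-L)).le))
  have hlog : logPeak L z = -Complex.log (1 - v) / L := rfl
  calc ‖logPeak L z‖ + ‖1 - logPeak L z‖ ≤ 1 + 4 * (2 / L) := by
        refine norm_add_norm_one_sub_le ?_ ?_ ?_
        · rw [hlog, Complex.div_ofReal_re, Complex.neg_re, ← neg_div]
          gcongr
          linarith
        · rw [hlog, Complex.div_ofReal_re, Complex.neg_re, div_le_one hL]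
          linarith
        · rw [hlog, Complex.div_ofReal_im, Complex.neg_im, abs_div, abs_neg, abs_of_pos hL]
          gcongr
          linarith [Real.pi_le_four]
    _ = 1 + 8 / L := by ring

theorem exists_polynomial_norm_add_norm_one_sub_le {η : ℝ} (hη : 0 < η) :
    ∃ p : Polynomial ℂ, p.eval 0 = 0 ∧ ‖p.eval 1 - 1‖ ≤ η ∧
      ∀ z : ℂ, ‖z‖ ≤ 1 → ‖p.eval z‖ + ‖1 - p.eval z‖ ≤ 1 + η := by
  obtain ⟨L, hLη, hL⟩ : ∃ L : ℝ, 8 / L = η / 2 ∧ 0 < L :=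
    ⟨16 / η, by field_simp; norm_num, by positivity⟩
  have hr : 0 < 1 - Real.exp (-L) := by simpa using hL
  have hR : 1 < (1 - Real.exp (-L))⁻¹ :=
    (one_lt_inv₀ hr).2 (sub_lt_self 1 (Real.exp_pos _))
  obtain ⟨p, hp0, hp⟩ := exists_polynomial_forall_norm_eval_sub_le
    (differentiableOn_logPeak hL) zero_le_one hR (show 0 < η / 4 by positivity)
  refine ⟨p, hp0.trans (logPeak_zero L), ?_, fun z hz => ?_⟩
  · have := hp 1 norm_one.le
    rw [logPeak_one hL.ne'] at this
    linarith
  · have hpz : ‖p.eval z‖ ≤ ‖logPeak L z‖ + ‖p.eval z - logPeak L z‖ :=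
      norm_le_norm_add_norm_sub' _ _
    have hpz' : ‖1 - p.eval z‖ ≤ ‖1 - logPeak L z‖ + ‖p.eval z - logPeak L z‖ := by
      simpa using norm_sub_le (1 - logPeak L z) (p.eval z - logPeak L z)
    linarith [hp z hz, norm_logPeak_add_norm_one_sub_logPeak_le hL hz]

section DaugavetDelta

variable {E : Type*} [SeminormedAddCommGroup E]

/-- The points of the closed unit ball that are at distance at least `2 - ε` from `x`, usually
denoted `Δ_ε(x)`. -/
def almostDiametral (x : E) (ε : ℝ) : Set E :=
  {y | ‖y‖ ≤ 1 ∧ 2 - ε ≤ ‖x - y‖}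

/-- `x` is a Daugavet point: for every `ε > 0` the closed unit ball is the closed convex hull of
`Δ_ε(x)`. -/
def IsDaugavetPoint [Module ℝ E] (x : E) : Prop :=
  ∀ ε > (0 : ℝ), closedBall (0 : E) 1 = closure (convexHull ℝ (almostDiametral x ε))

/-- `x` is a Δ-point: for every `ε > 0` it lies in the closed convex hull of `Δ_ε(x)`. -/
def IsDeltaPoint [Module ℝ E] (x : E) : Prop :=
  ∀ ε > (0 : ℝ), x ∈ closure (convexHull ℝ (almostDiametral x ε))

theorem almostDiametral_subset_closedBall (x : E) (ε : ℝ) :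
    almostDiametral x ε ⊆ closedBall 0 1 :=
  fun _ hy => mem_closedBall_zero_iff.2 hy.1

theorem IsDaugavetPoint.isDeltaPoint [Module ℝ E] {x : E} (h : IsDaugavetPoint x) (hx : ‖x‖ ≤ 1) :
    IsDeltaPoint x :=
  fun ε hε => h ε hε ▸ mem_closedBall_zero_iff.2 hx

theorem IsDeltaPoint.exists_lt_apply [Module ℝ E] {x : E} (h : IsDeltaPoint x) (φ : E →L[ℝ] ℝ)
    {c ε : ℝ} (hε : 0 < ε) (hc : c < φ x) : ∃ y ∈ almostDiametral x ε, c < φ y := by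
  by_contra! hle
  exact hc.not_ge <| closure_minimal
    (convexHull_min hle (convex_halfSpace_le φ.isLinear c))
    (isClosed_le φ.continuous continuous_const) (h ε hε)

variable [NormedSpace ℝ E]

theorem isDaugavetPoint_of_forall_mem_closure {x : E}
    (h : ∀ ε > (0 : ℝ), ∀ y : E, ‖y‖ ≤ 1 → y ∈ closure (convexHull ℝ (almostDiametral x ε))) :
    IsDaugavetPoint x := fun ε hε =>
  Set.Subset.antisymm (fun y hy => h ε hε y (mem_closedBall_zero_iff.1 hy)) <|
    closure_minimal (convexHull_min (almostDiametral_subset_closedBall x ε)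
      (convex_closedBall 0 1)) isClosed_closedBall

theorem exists_norm_smul_le_one_norm_smul_sub_le {y : E} {η : ℝ} (hη : 0 ≤ η) (hy : ‖y‖ ≤ 1 + η) :
    ∃ a : ℝ, ‖a • y‖ ≤ 1 ∧ ‖a • y - y‖ ≤ η := by
  have hpos : 0 < 1 + η := by linarith
  refine ⟨(1 + η)⁻¹, ?_, ?_⟩
  · rwa [norm_smul, norm_inv, Real.norm_of_nonneg hpos.le, inv_mul_le_one₀ hpos]
  · have hsub : (1 + η)⁻¹ • y - y = -(η * (1 + η)⁻¹) • y := by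
      rw [← one_smul ℝ y, smul_smul, ← sub_smul, one_smul]
      congr 1
      field_simp
      ring
    rw [hsub, norm_smul, norm_neg, Real.norm_of_nonneg (by positivity), mul_assoc]
    exact mul_le_of_le_one_right hη ((inv_mul_le_one₀ hpos).2 hy)

end DaugavetDelta

theorem norm_sum_le_card_mul_add {ι E : Type*} [SeminormedAddCommGroup E] {T : Finset ι}
    {v : ι → E} {δ C : ℝ} (hδ : 0 ≤ δ) (hC₀ : 0 ≤ C) (hC : ∀ i ∈ T, ‖v i‖ ≤ C)
    (hv : {i | i ∈ T ∧ δ < ‖v i‖}.Subsingleton) : ‖∑ i ∈ T, v i‖ ≤ T.card * δ + C := by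
  classical
  calc ‖∑ i ∈ T, v i‖ ≤ ∑ i ∈ T, (δ + if δ < ‖v i‖ then C else 0) := by
        refine norm_sum_le_of_le T fun i hi => ?_
        split_ifs with h
        · linarith [hC i hi]
        · linarith
    _ = T.card * δ + (T.filter (δ < ‖v ·‖)).card * C := by
        rw [Finset.sum_add_distrib, ← Finset.sum_filter, Finset.sum_const, Finset.sum_const,
          nsmul_eq_mul, nsmul_eq_mul]
    _ ≤ T.card * δ + C := by
        have hcard : (T.filter (δ < ‖v ·‖)).card ≤ 1 :=
          Finset.card_le_one.2 fun i hi j hj => hv (by simpa using hi) (by simpa using hj)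
        gcongr
        exact mul_le_of_le_one_left hC₀ (mod_cast hcard)

section Average

variable {K E F : Type*} [TopologicalSpace K] [CompactSpace K] [NormedAddCommGroup E]
  [NormedSpace ℝ E] [NormedAddCommGroup F] [NormedSpace ℝ F]

theorem norm_average_sub_le (e : F →ₗᵢ[ℝ] C(K, E)) {ι : Type*} {T : Finset ι} (hT : T.Nonempty)
    {x : ι → F} {g : F} {U : ι → Set K} (hU : (T : Set ι).PairwiseDisjoint U) {δ C : ℝ}
    (hδ : 0 ≤ δ) (hC : ∀ i ∈ T, ‖x i - g‖ ≤ C)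
    (hx : ∀ i ∈ T, ∀ s ∉ U i, ‖e (x i) s - e g s‖ ≤ δ) :
    ‖T.centerMass (fun _ => (1 : ℝ)) x - g‖ ≤ δ + C / T.card := by
  have hcard : (0 : ℝ) < T.card := mod_cast hT.card_pos
  have hC₀ : 0 ≤ C := hT.elim fun i hi => (norm_nonneg _).trans (hC i hi)
  have haverage : T.centerMass (fun _ => (1 : ℝ)) x - g = (T.card : ℝ)⁻¹ • ∑ i ∈ T, (x i - g) := by
    rw [Finset.centerMass, Finset.sum_sub_distrib, smul_sub, Finset.sum_const, Finset.sum_const,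
      nsmul_eq_mul, mul_one, ← Nat.cast_smul_eq_nsmul ℝ, inv_smul_smul₀ hcard.ne']
    simp only [one_smul]
  have hsum : ‖∑ i ∈ T, (x i - g)‖ ≤ T.card * δ + C := by
    rw [← e.norm_map, ContinuousMap.norm_le _ (by positivity)]
    intro s
    simp only [map_sum, map_sub, ContinuousMap.sum_apply, ContinuousMap.sub_apply]
    refine norm_sum_le_card_mul_add hδ hC₀ (fun i hi => ?_) fun i hi j hj => ?_
    · exact (((e (x i) - e g).norm_coe_le_norm s).trans_eq (by rw [← map_sub, e.norm_map])).trans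
        (hC i hi)
    · have mem_U {k : ι} (hk : k ∈ T ∧ δ < ‖e (x k) s - e g s‖) : s ∈ U k :=
        not_imp_comm.1 (hx k hk.1 s) hk.2.not_ge
      exact hU.elim_set hi.1 hj.1 s (mem_U hi) (mem_U hj)
  rw [haverage, norm_smul, norm_inv, Real.norm_of_nonneg hcard.le, inv_mul_le_iff₀ hcard]
  exact hsum.trans_eq (by field_simp)

theorem mem_closure_convexHull_of_forall_exists_near [T2Space K] (e : F →ₗᵢ[ℝ] C(K, E))
    {S : Set F} (hS : Bornology.IsBounded S) {P : Set K} (hP : P.Infinite) {g : F}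
    (h : ∀ t ∈ P, ∀ U : Set K, IsOpen U → t ∈ U → ∀ δ > 0, ∃ x ∈ S, ∀ s ∉ U, ‖e x s - e g s‖ ≤ δ) :
    g ∈ closure (convexHull ℝ S) := by
  obtain ⟨C, hC₀, hC⟩ := hS.subset_closedBall_lt 0 g
  refine Metric.mem_closure_iff.2 fun ρ hρ => ?_
  obtain ⟨n, hn⟩ := exists_nat_gt (C / (ρ / 2))
  have hn₀ : 0 < (n : ℝ) := hn.trans' (by positivity)
  obtain ⟨T, hTP, rfl⟩ := hP.exists_subset_card_eq n
  obtain ⟨U, hU, hdisj⟩ := T.finite_toSet.t2_separation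
  choose! x hxS hx using fun t ht => h t (hTP ht) (U t) (hU t).2 (hU t).1 (ρ / 2) (by positivity)
  have hTne : T.Nonempty := Finset.card_pos.1 (mod_cast hn₀)
  refine ⟨T.centerMass (fun _ => (1 : ℝ)) x,
    T.centerMass_mem_convexHull (fun _ _ => zero_le_one) (by simpa using hTne) hxS, ?_⟩
  calc dist g (T.centerMass (fun _ => (1 : ℝ)) x) ≤ ρ / 2 + C / T.card := by
        rw [dist_comm, dist_eq_norm]
        exact norm_average_sub_le e hTne hdisj (by positivity)
          (fun t ht => mem_closedBall_iff_norm.1 (hC (hxS t ht))) hx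
    _ < ρ / 2 + ρ / 2 := by
        rw [add_lt_add_iff_left]
        exact (div_lt_comm₀ (by positivity) hn₀).1 hn
    _ = ρ := add_halves ρ

end Average

section StrongBoundaryPoint

variable {K : Type*} [TopologicalSpace K] [CompactSpace K] {A : Subalgebra ℂ C(K, ℂ)} {t : K}
  {U : Set K}

theorem IsStrongBoundaryPoint.exists_norm_add_norm_one_sub_le (ht : IsStrongBoundaryPoint A t)
    (hU : IsOpen U) (htU : t ∈ U) {η : ℝ} (hη : 0 < η) :
    ∃ u ∈ A, ‖u t - 1‖ ≤ η ∧ (∀ s, ‖u s‖ + ‖1 - u s‖ ≤ 1 + η) ∧ ∀ s ∉ U, ‖u s‖ ≤ η := by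
  obtain ⟨p, hp₀, hp₁, hp⟩ := exists_polynomial_norm_add_norm_one_sub_le hη
  obtain ⟨h, hA, ht₁, hnorm, c, hc, hcU⟩ := ht U hU htU
  have hh (s : K) : ‖h s‖ ≤ 1 := hnorm ▸ h.norm_coe_le_norm s
  obtain ⟨d, hd, hpd⟩ := Metric.continuousAt_iff.1 (p.continuous.continuousAt (x := 0)) η hη
  obtain ⟨m, hm⟩ := exists_pow_lt_of_lt_one hd (max_lt hc one_pos)
  have heval (s : K) : Polynomial.aeval (h ^ m) p s = p.eval (h s ^ m) := by
    rw [Polynomial.aeval_continuousMap_apply, ContinuousMap.pow_apply]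
  refine ⟨Polynomial.aeval (h ^ m) p, ?_, ?_, fun s => ?_, fun s hs => ?_⟩
  · exact Polynomial.aeval_subalgebra_coe p A ⟨h ^ m, pow_mem hA m⟩ ▸ Subtype.prop _
  · rwa [heval, ht₁, one_pow]
  · rw [heval]
    exact hp _ (by simpa using pow_le_one₀ (norm_nonneg _) (hh s))
  · have hsmall : dist (h s ^ m) 0 < d := by
      rw [dist_zero_right, norm_pow]
      exact (pow_le_pow_left₀ (norm_nonneg _) ((hcU s hs).trans (le_max_left c 0)) m).trans_lt hm
    simpa [heval, hp₀] using (hpd hsmall).le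

theorem IsStrongBoundaryPoint.exists_norm_sub_le (ht : IsStrongBoundaryPoint A t)
    (hU : IsOpen U) (htU : t ∈ U) {g : C(K, ℂ)} (hgA : g ∈ A) (hg : ‖g‖ ≤ 1) {c : ℂ}
    (hc : ‖c‖ ≤ 1) {δ : ℝ} (hδ : 0 < δ) :
    ∃ x ∈ A, ‖x‖ ≤ 1 ∧ ‖x t - c‖ ≤ δ ∧ ∀ s ∉ U, ‖x s - g s‖ ≤ δ := by
  obtain ⟨u, huA, hut, hu, huU⟩ :=
    ht.exists_norm_add_norm_one_sub_le hU htU (show 0 < δ / 3 by positivity)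
  have hgs (s : K) : ‖g s‖ ≤ 1 := (g.norm_coe_le_norm s).trans hg
  have hgc (s : K) : ‖g s - c‖ ≤ 2 := (norm_sub_le _ _).trans (by linarith [hgs s])
  set y : C(K, ℂ) := g * (1 - u) + c • u
  have hyA : y ∈ A := add_mem (mul_mem hgA (sub_mem A.one_mem huA)) (A.smul_mem huA c)
  have hys (s : K) : y s = g s * (1 - u s) + c * u s := rfl
  have hynorm : ‖y‖ ≤ 1 + δ / 3 := by
    refine (y.norm_le (by positivity)).2 fun s => ?_
    calc ‖y s‖ ≤ ‖g s‖ * ‖1 - u s‖ + ‖c‖ * ‖u s‖ := by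
          simpa only [hys, norm_mul] using norm_add_le (g s * (1 - u s)) (c * u s)
      _ ≤ 1 * ‖1 - u s‖ + 1 * ‖u s‖ := by
          gcongr
          exact hgs s
      _ ≤ 1 + δ / 3 := by linarith [hu s]
  obtain ⟨a, ha, hay⟩ := exists_norm_smul_le_one_norm_smul_sub_le (by positivity) hynorm
  have hays (s : K) : ‖(a • y) s - y s‖ ≤ δ / 3 := ((a • y - y).norm_coe_le_norm s).trans hay
  refine ⟨a • y, A.smul_mem (r := (a : ℂ)) hyA, ha, ?_, fun s hs => ?_⟩
  · have hyt : ‖y t - c‖ ≤ 2 * (δ / 3) := by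
      rw [show y t - c = (g t - c) * (1 - u t) by rw [hys]; ring, norm_mul, norm_sub_rev 1]
      gcongr
      exact hgc t
    linarith [norm_sub_le_norm_sub_add_norm_sub ((a • y) t) (y t) c, hays t]
  · have hyg : ‖y s - g s‖ ≤ 2 * (δ / 3) := by
      rw [show y s - g s = -((g s - c) * u s) by rw [hys]; ring, norm_neg, norm_mul]
      gcongr
      exacts [hgc s, huU s hs]
    linarith [norm_sub_le_norm_sub_add_norm_sub ((a • y) s) (y s) (g s), hays s]

/-- The inclusion `A → C(K, ℂ)` as a real linear isometry; the results on function spaces are stated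
for an arbitrary such isometry into some `C(K, E)`. -/
noncomputable def realInclusion (A : Subalgebra ℂ C(K, ℂ)) : A →ₗᵢ[ℝ] C(K, ℂ) where
  toLinearMap := A.val.toLinearMap.restrictScalars ℝ
  norm_map' _ := rfl

theorem infinite_inter_of_accPt_closure {X : Type*} [TopologicalSpace X] [T1Space X] {t : X}
    {D W : Set X} (ht : AccPt t (𝓟 (closure D))) (hW : W ∈ 𝓝 t) : (W ∩ D).Infinite := by
  have htD : t ∈ derivedSet D := derivedSet_closure D ▸ ht
  exact Set.Infinite.of_accPt (AccPt.nhds_inter htD hW)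

theorem isDaugavetPoint_of_accPt [T2Space K] {f : A} (hf : ‖f‖ ≤ 1) {t₀ : K}
    (ht₀ : AccPt t₀ (𝓟 (closure {t | IsStrongBoundaryPoint A t})))
    (hft₀ : ‖(f : C(K, ℂ)) t₀‖ = 1) : IsDaugavetPoint f := by
  refine isDaugavetPoint_of_forall_mem_closure fun ε hε g hg => ?_
  have hnhds : {t | 1 - ε / 4 < ‖(f : C(K, ℂ)) t‖} ∈ 𝓝 t₀ :=
    (isOpen_lt continuous_const (by fun_prop)).mem_nhds (by
      rw [Set.mem_ofPred_eq, hft₀]; linarith)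
  refine mem_closure_convexHull_of_forall_exists_near (realInclusion A)
    (isBounded_closedBall.subset (almostDiametral_subset_closedBall f ε))
    (infinite_inter_of_accPt_closure ht₀ hnhds) ?_
  rintro t ⟨hft : 1 - ε / 4 < ‖(f : C(K, ℂ)) t‖, ht⟩ U hU htU δ hδ
  obtain ⟨x, hxA, hx, hxt, hxU⟩ := ht.exists_norm_sub_le hU htU g.2 hg
    (c := -(f : C(K, ℂ)) t) (by
      rw [norm_neg]; exact ((f : C(K, ℂ)).norm_coe_le_norm t).trans hf)
    (show 0 < min δ (ε / 2) by positivity)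
  refine ⟨⟨x, hxA⟩, ⟨hx, ?_⟩, fun s hs => (hxU s hs).trans (min_le_left _ _)⟩
  have hdist : ‖(f : C(K, ℂ)) t - x t‖ ≤ ‖f - ⟨x, hxA⟩‖ :=
    ((f : C(K, ℂ)) - x).norm_coe_le_norm t
  have hdouble : 2 * ‖(f : C(K, ℂ)) t‖ ≤ ‖(f : C(K, ℂ)) t - x t‖ + ‖x t - -(f : C(K, ℂ)) t‖ := by
    rw [← Real.norm_ofNat, ← norm_smul]
    refine le_of_eq_of_le (congrArg _ ?_) (norm_add_le _ _)
    rw [two_smul]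
    ring
  linarith [hxt.trans (min_le_right _ _)]

end StrongBoundaryPoint

section DeltaPoint

variable {K : Type*} [TopologicalSpace K]

theorem finite_of_forall_not_accPt {Γ H : Set K} (hH : IsCompact H) (hHΓ : H ⊆ Γ)
    (h : ∀ t ∈ H, ¬AccPt t (𝓟 Γ)) : H.Finite := by
  by_contra hinf
  obtain ⟨t, htH, ht⟩ := Set.Infinite.exists_accPt_of_subset_isCompact hinf hH subset_rfl
  exact h t htH (ht.mono (principal_mono.2 hHΓ))

theorem isClosed_diff_of_forall_not_accPt {Γ H : Set K} (hΓ : IsClosed Γ)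
    (h : ∀ t ∈ H, ¬AccPt t (𝓟 Γ)) : IsClosed (Γ \ H) := by
  refine isClosed_iff_accPt.2 fun t ht => ?_
  have htΓ : AccPt t (𝓟 Γ) := ht.mono (principal_mono.2 Set.sdiff_subset)
  exact ⟨isClosed_iff_accPt.1 hΓ t htΓ, fun htH => h t htH htΓ⟩

theorem real_inner_nonpos_of_three_halves_le_norm_sub {E : Type*} [SeminormedAddCommGroup E]
    [InnerProductSpace ℝ E] {a b : E} (ha : ‖a‖ ≤ 1) (hb : ‖b‖ ≤ 1) (hab : 3 / 2 ≤ ‖a - b‖) :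
    inner ℝ a b ≤ 0 := by
  have := norm_sub_sq_real a b
  nlinarith [norm_nonneg a, norm_nonneg b]

variable [CompactSpace K] {E F : Type*} [NormedAddCommGroup E] [InnerProductSpace ℝ E]
  [NormedAddCommGroup F] [NormedSpace ℝ F]

/-- The functional `g ↦ ∑ t ∈ T, ⟪e f t, e g t⟫`, which separates `f` from `Δ_ε(f)` when `T` is the
set of points of a boundary at which `‖e f t‖ = 1`. -/
noncomputable def sumInner (e : F →ₗᵢ[ℝ] C(K, E)) (T : Finset K) (f : F) : F →L[ℝ] ℝ :=
  ∑ t ∈ T, innerSL ℝ (e f t) ∘L ContinuousMap.evalCLM ℝ t ∘L e.toContinuousLinearMap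

theorem sumInner_apply (e : F →ₗᵢ[ℝ] C(K, E)) (T : Finset K) (f g : F) :
    sumInner e T f g = ∑ t ∈ T, inner ℝ (e f t) (e g t) := by
  simp [sumInner, ContinuousMap.evalCLM]

theorem exists_sumInner_le_of_mem_almostDiametral (e : F →ₗᵢ[ℝ] C(K, E)) {Γ : Set K}
    (hΓ : ∀ x : F, ∃ t ∈ Γ, ‖e x t‖ = ‖x‖) {f : F} (hf : ‖f‖ ≤ 1) {T : Finset K} {c : ℝ}
    (hc : c < 1) (hT : ∀ t ∈ Γ, t ∉ T → ‖e f t‖ ≤ c) :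
    ∃ ε > 0, ∀ g ∈ almostDiametral f ε, sumInner e T f g ≤ T.card - 1 := by
  classical
  have norm_apply_le {x : F} (hx : ‖x‖ ≤ 1) (t : K) : ‖e x t‖ ≤ 1 :=
    ((e x).norm_coe_le_norm t).trans ((e.norm_map x).trans_le hx)
  obtain ⟨ε, hε, hε_lt⟩ := exists_between (lt_min one_half_pos (sub_pos.2 hc))
  rw [lt_min_iff] at hε_lt
  refine ⟨ε, hε, fun g ⟨hg, hfg⟩ => ?_⟩
  obtain ⟨t, htΓ, ht⟩ := hΓ (f - g)
  rw [← ht, map_sub, ContinuousMap.sub_apply] at hfg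
  have htT : t ∈ T := by
    by_contra htT
    linarith [hT t htΓ htT, norm_sub_le (e f t) (e g t), norm_apply_le hg t]
  have hinner : inner ℝ (e f t) (e g t) ≤ 0 :=
    real_inner_nonpos_of_three_halves_le_norm_sub (norm_apply_le hf t) (norm_apply_le hg t)
      (by linarith)
  have hrest : ∑ s ∈ T.erase t, inner ℝ (e f s) (e g s) ≤ (T.erase t).card • (1 : ℝ) :=
    Finset.sum_le_card_nsmul _ _ _ fun s _ => (real_inner_le_norm _ _).trans
      (mul_le_one₀ (norm_apply_le hf s) (norm_nonneg _) (norm_apply_le hg s))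
  rw [nsmul_eq_mul, mul_one, Finset.cast_card_erase_of_mem htT] at hrest
  rw [sumInner_apply, ← Finset.add_sum_erase T _ htT]
  linarith

theorem IsDeltaPoint.exists_accPt (e : F →ₗᵢ[ℝ] C(K, E)) {Γ : Set K} (hΓ : IsClosed Γ)
    (hΓe : ∀ x : F, ∃ t ∈ Γ, ‖e x t‖ = ‖x‖) {f : F} (hf : ‖f‖ ≤ 1) (h : IsDeltaPoint f) :
    ∃ t ∈ Γ, AccPt t (𝓟 Γ) ∧ ‖e f t‖ = 1 := by
  by_contra! hacc
  set H : Set K := {t ∈ Γ | ‖e f t‖ = 1}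
  have hHΓ : H ⊆ Γ := Set.sep_subset _ _
  have hH (t : K) (ht : t ∈ H) : ¬AccPt t (𝓟 Γ) := fun hacc' => hacc t ht.1 hacc' ht.2
  have hHfinite : H.Finite := finite_of_forall_not_accPt
    (hΓ.inter (isClosed_eq (by fun_prop) continuous_const)).isCompact hHΓ hH
  have hlt (t : K) (ht : t ∈ Γ \ H) : ‖e f t‖ < 1 :=
    (((e f).norm_coe_le_norm t).trans ((e.norm_map f).trans_le hf)).lt_of_ne
      fun ht₁ => ht.2 ⟨ht.1, ht₁⟩
  have hcont : ContinuousOn (fun t => ‖e f t‖) (Γ \ H) := by fun_prop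
  obtain ⟨c, hc, hcH⟩ : ∃ c < 1, ∀ t ∈ Γ \ H, ‖e f t‖ ≤ c :=
    (isClosed_diff_of_forall_not_accPt hΓ hH).isCompact.exists_forall_le' (α := ℝᵒᵈ) hcont hlt
  obtain ⟨ε, hε, hle⟩ := exists_sumInner_le_of_mem_almostDiametral e hΓe hf hc
    (T := hHfinite.toFinset) fun t ht htH => hcH t ⟨ht, by simpa using htH⟩
  have hself : sumInner e hHfinite.toFinset f f = hHfinite.toFinset.card := by
    rw [sumInner_apply, Finset.cast_card]
    refine Finset.sum_congr rfl fun t ht => ?_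
    rw [real_inner_self_eq_norm_sq, (hHfinite.mem_toFinset.1 ht).2, one_pow]
  obtain ⟨g, hg, hlt_g⟩ := h.exists_lt_apply _ hε ((sub_one_lt _).trans_eq hself.symm)
  exact hlt_g.not_ge (hle g hg)

end DeltaPoint

theorem stmt_15_general {K : Type*} [TopologicalSpace K] [CompactSpace K] [T2Space K]
    (A : Subalgebra ℂ C(K, ℂ)) (Γ : Set K) (hΓclosed : IsClosed Γ)
    (hΓbd : ∀ g ∈ A, ∃ t ∈ Γ, ‖g t‖ = ‖g‖)
    (hΓdense : Γ ⊆ closure {t | t ∈ Γ ∧ IsStrongBoundaryPoint A t}) (f : A) (hf : ‖f‖ ≤ 1) :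
    (IsDaugavetPoint f ↔ IsDeltaPoint f) ∧
      (IsDeltaPoint f ↔ ∃ t₀ ∈ Γ, t₀ ∈ closure (Γ \ {t₀}) ∧ ‖(f : C(K, ℂ)) t₀‖ = 1) := by
  simp only [mem_closure_iff_clusterPt, ← accPt_principal_iff_clusterPt]
  have daugavet_of_accPt : (∃ t₀ ∈ Γ, AccPt t₀ (𝓟 Γ) ∧ ‖(f : C(K, ℂ)) t₀‖ = 1) →
      IsDaugavetPoint f := fun ⟨t₀, _, hacc, hft₀⟩ =>
    isDaugavetPoint_of_accPt hf (hacc.mono (principal_mono.2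
      (hΓdense.trans (closure_mono fun _ ht => ht.2)))) hft₀
  have accPt_of_delta (h : IsDeltaPoint f) : ∃ t₀ ∈ Γ, AccPt t₀ (𝓟 Γ) ∧ ‖(f : C(K, ℂ)) t₀‖ = 1 :=
    h.exists_accPt (realInclusion A) hΓclosed (fun x => hΓbd x x.2) hf
  exact ⟨⟨fun h => h.isDeltaPoint hf, fun h => daugavet_of_accPt (accPt_of_delta h)⟩,
    accPt_of_delta, fun h => (daugavet_of_accPt h).isDeltaPoint hf⟩

/- STATEMENT 15: Let `A` be a uniform algebra on a compact Hausdorff space `K` and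
`Γ` a closed boundary for `A` in which the strong boundary points of `A` are dense.
For `f ∈ A` with `‖f‖ = 1`, the following are equivalent: (i) `f` is a Daugavet
point; (ii) `f` is a Δ-point; (iii) there is a limit point `t₀` of `Γ` with
`|f(t₀)| = 1`. -/
theorem stmt_15 {K : Type*} [TopologicalSpace K] [CompactSpace K] [T2Space K]
    (A : Subalgebra ℂ C(K, ℂ)) (hAclosed : IsClosed (A : Set C(K, ℂ)))
    (hAsep : ∀ s t : K, s ≠ t → ∃ g ∈ A, g s ≠ g t)
    (Γ : Set K) (hΓclosed : IsClosed Γ)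
    (hΓbd : ∀ g ∈ A, ∃ t ∈ Γ, ‖g t‖ = ‖g‖)
    (hΓdense : Γ ⊆ closure {t | t ∈ Γ ∧ IsStrongBoundaryPoint A t})
    (f : A) (hf1 : ‖f‖ = 1) :
    ((∀ ε > (0 : ℝ),
        Metric.closedBall (0 : A) 1 =
          closure (convexHull ℝ {g : A | ‖g‖ ≤ 1 ∧ 2 - ε ≤ ‖f - g‖})) ↔
      (∀ ε > (0 : ℝ),
        f ∈ closure (convexHull ℝ {g : A | ‖g‖ ≤ 1 ∧ 2 - ε ≤ ‖f - g‖}))) ∧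
    ((∀ ε > (0 : ℝ),
        f ∈ closure (convexHull ℝ {g : A | ‖g‖ ≤ 1 ∧ 2 - ε ≤ ‖f - g‖})) ↔
      (∃ t₀ ∈ Γ, t₀ ∈ closure (Γ \ {t₀}) ∧ ‖(f : C(K, ℂ)) t₀‖ = 1)) :=
  stmt_15_general A Γ hΓclosed hΓbd hΓdense f hf1.le
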